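/- For every real R with R ≤ R_{−1}^{+}(Q), E_c(R,Q) = max over ρ ∈ [−1,0] of { E₀(ρ,Q) − ρ·R }. If this maximum is attained at some ρ ∈ (−1,0], then the minimum defining E_c(R,Q) is attained uniquely at the joint distribution T_ρ∘V_ρ; if it is attained at ρ = −1, then the minimizers of E_c(R,Q) are exactly the joint distributions T_{−1}∘V with V admissible at −1 and D(T_{−1}∘V‖T_{−1}×Q) = R. -/

import Mathlib

/-!
The proof is Lagrangian duality with an explicit optimality gap. Write `s = 1 + ρ ∈ [0,1]`. If
`T∘V` is absolutely continuous with respect to `Q∘P` (otherwise `D(T∘V‖Q∘P) = ∞`), then for `s > 0`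

  `D(T∘V‖Q∘P) + ρ D(T∘V‖T×Q) = E₀(ρ,Q) + D(T‖T_ρ) + s ∑ T(y) D(V(·|y)‖V_ρ(·|y))`

(`gap_pos`), and for `s = 0` the last term becomes `∑ T(y) V(x|y) log (max P(y|·) / P(y|x))`
(`gap_zero`). By Gibbs' inequality the left side is at least `E₀(ρ,Q)`, with equality only at
`T_ρ∘V_ρ` for `ρ > -1`, and exactly for `T = T_{-1}` and `V` admissible (where `T > 0`) for
`ρ = -1`. As `ρ ≤ 0`, every feasible pair satisfies `D(T∘V‖Q∘P) ≥ E₀(ρ,Q) - ρ R`, and equality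
forces the gap to vanish and, when `ρ < 0`, `D(T∘V‖T×Q) = R`. This gives weak duality and the
description of the minimizers.

For the reverse inequality, the tilted distributions are rescaled by `max P(y|·)`, so that
they extend continuously to `s = 0` (`phi_continuousOn`); hence the dual objective attains its
maximum on `[0,1]`. Testing the gap identity for one `ρ` on the tilted distribution of another
shows that `D(T_ρ∘V_ρ‖T_ρ×Q)` is a supergradient of `E₀` at `ρ` (`supergradient`). By continuity of
this rate, at a maximizer it is `≥ R` if `ρ > -1` and `≤ R` if `ρ < 0`. So for `ρ > -1` the pair
`T_ρ∘V_ρ` is feasible and tight. For `ρ = -1` the rates of the admissible `V` form a compact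
interval that contains a value `≤ R` and has supremum `R_{-1}^+ ≥ R`, so some admissible `V` has
rate exactly `R` (`exists_admissible`).
-/

open scoped BigOperators
open Filter Topology

/-- `f` is a probability mass function on a finite alphabet. -/
def IsPMF {α : Type*} [Fintype α] (f : α → ℝ) : Prop :=
  (∀ a, 0 ≤ f a) ∧ ∑ a, f a = 1

/-- `P` is a discrete memoryless channel from `𝓧` to `𝓨`. -/
def IsChannel {𝓧 𝓨 : Type*} [Fintype 𝓧] [Fintype 𝓨] (P : 𝓧 → 𝓨 → ℝ) : Prop :=
  ∀ x, IsPMF (P x)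

/-- `V` is a conditional pmf on `𝓧` given `𝓨`. -/
def IsCondPMF {𝓧 𝓨 : Type*} [Fintype 𝓧] [Fintype 𝓨] (V : 𝓨 → 𝓧 → ℝ) : Prop :=
  ∀ y, IsPMF (V y)

/-- one term `s·log(s/t)` of a KL divergence, with the conventions
    `0·log(0/t) = 0` and `s·log(s/0) = +∞` for `s > 0`. -/
noncomputable def klTerm (s t : ℝ) : EReal :=
  if s = 0 then 0 else if t = 0 then ⊤ else ((s * Real.log (s / t) : ℝ) : EReal)

/-- `D(T∘V ‖ Q∘P)`. -/
noncomputable def DQP {𝓧 𝓨 : Type*} [Fintype 𝓧] [Fintype 𝓨]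
    (T : 𝓨 → ℝ) (V : 𝓨 → 𝓧 → ℝ) (Q : 𝓧 → ℝ) (P : 𝓧 → 𝓨 → ℝ) : EReal :=
  ∑ y, ∑ x, klTerm (T y * V y x) (Q x * P x y)

/-- `D(T∘V ‖ T×Q)`. -/
noncomputable def DTQ {𝓧 𝓨 : Type*} [Fintype 𝓧] [Fintype 𝓨]
    (T : 𝓨 → ℝ) (V : 𝓨 → 𝓧 → ℝ) (Q : 𝓧 → ℝ) : EReal :=
  ∑ y, ∑ x, klTerm (T y * V y x) (T y * Q x)

/-- Gallager's function `E₀(ρ,Q)` (for `ρ > −1`). -/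
noncomputable def E0 {𝓧 𝓨 : Type*} [Fintype 𝓧] [Fintype 𝓨]
    (ρ : ℝ) (Q : 𝓧 → ℝ) (P : 𝓧 → 𝓨 → ℝ) : ℝ :=
  - Real.log (∑ y, (∑ x, Q x * P x y ^ (1 / (1 + ρ))) ^ (1 + ρ))

/-- The joint distribution `T_ρ∘V_ρ` on `𝓧 × 𝓨` (for `ρ > −1`). -/
noncomputable def Jrho {𝓧 𝓨 : Type*} [Fintype 𝓧] [Fintype 𝓨]
    (ρ : ℝ) (Q : 𝓧 → ℝ) (P : 𝓧 → 𝓨 → ℝ) (x : 𝓧) (y : 𝓨) : ℝ :=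
  Q x * P x y ^ (1 / (1 + ρ)) * (∑ a, Q a * P a y ^ (1 / (1 + ρ))) ^ ρ /
    ∑ y', (∑ a, Q a * P a y' ^ (1 / (1 + ρ))) ^ (1 + ρ)

/-- `max_{x : Q(x) > 0} P(y|x)`. -/
noncomputable def maxP {𝓧 𝓨 : Type*} (Q : 𝓧 → ℝ) (P : 𝓧 → 𝓨 → ℝ) (y : 𝓨) : ℝ :=
  ⨆ x : {x // 0 < Q x}, P x.1 y

/-- `E₀(−1,Q) = −log ∑_y max_{x : Q(x)>0} P(y|x)`. -/
noncomputable def E0m1 {𝓧 𝓨 : Type*} [Fintype 𝓧] [Fintype 𝓨]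
    (Q : 𝓧 → ℝ) (P : 𝓧 → 𝓨 → ℝ) : ℝ :=
  - Real.log (∑ y, maxP Q P y)

/-- `E₀(ρ,Q)` extended to `ρ = −1`. -/
noncomputable def E0full {𝓧 𝓨 : Type*} [Fintype 𝓧] [Fintype 𝓨]
    (ρ : ℝ) (Q : 𝓧 → ℝ) (P : 𝓧 → 𝓨 → ℝ) : ℝ :=
  if ρ = -1 then E0m1 Q P else E0 ρ Q P

/-- `T_{−1}(y) ∝ max_{a : Q(a)>0} P(y|a)`. -/
noncomputable def Tm1 {𝓧 𝓨 : Type*} [Fintype 𝓧] [Fintype 𝓨]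
    (Q : 𝓧 → ℝ) (P : 𝓧 → 𝓨 → ℝ) (y : 𝓨) : ℝ :=
  maxP Q P y / ∑ y', maxP Q P y'

/-- `V` is admissible at `ρ = −1`: `V(x|y) = 0` for every `x` outside
    `argmax_{a : Q(a)>0} P(y|a)`. -/
def AdmissibleAtM1 {𝓧 𝓨 : Type*} [Fintype 𝓧] [Fintype 𝓨]
    (Q : 𝓧 → ℝ) (P : 𝓧 → 𝓨 → ℝ) (V : 𝓨 → 𝓧 → ℝ) : Prop :=
  ∀ y x, ¬ (0 < Q x ∧ ∀ a, 0 < Q a → P a y ≤ P x y) → V y x = 0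

/-- the error exponent `E_e(R,Q)`. -/
noncomputable def Ee {𝓧 𝓨 : Type*} [Fintype 𝓧] [Fintype 𝓨]
    (R : ℝ) (Q : 𝓧 → ℝ) (P : 𝓧 → 𝓨 → ℝ) : EReal :=
  sInf {v | ∃ T : 𝓨 → ℝ, ∃ V : 𝓨 → 𝓧 → ℝ, IsPMF T ∧ IsCondPMF V ∧
    v = DQP T V Q P + max (DTQ T V Q - (R : EReal)) 0}

/-- the ML correct-decoding exponent `E_c^{ML}(R,Q)`. -/
noncomputable def EcML {𝓧 𝓨 : Type*} [Fintype 𝓧] [Fintype 𝓨]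
    (R : ℝ) (Q : 𝓧 → ℝ) (P : 𝓧 → 𝓨 → ℝ) : EReal :=
  sInf {v | ∃ T : 𝓨 → ℝ, ∃ V : 𝓨 → 𝓧 → ℝ, IsPMF T ∧ IsCondPMF V ∧
    v = DQP T V Q P + max ((R : EReal) - DTQ T V Q) 0}

/-- the strict correct-decoding exponent `E_c(R,Q)` (`+∞` if infeasible). -/
noncomputable def Ec {𝓧 𝓨 : Type*} [Fintype 𝓧] [Fintype 𝓨]
    (R : ℝ) (Q : 𝓧 → ℝ) (P : 𝓧 → 𝓨 → ℝ) : EReal :=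
  sInf {v | ∃ T : 𝓨 → ℝ, ∃ V : 𝓨 → 𝓧 → ℝ, IsPMF T ∧ IsCondPMF V ∧
    (R : EReal) ≤ DTQ T V Q ∧ v = DQP T V Q P}

/-- the mutual information `I(Q∘P)`. -/
noncomputable def MI {𝓧 𝓨 : Type*} [Fintype 𝓧] [Fintype 𝓨]
    (Q : 𝓧 → ℝ) (P : 𝓧 → 𝓨 → ℝ) : ℝ :=
  ∑ x, ∑ y, if Q x * P x y = 0 then 0
    else Q x * P x y * Real.log (P x y / ∑ a, Q a * P a y)

/-- the capacity `C(Z)` of the channel restricted to input letters in `Z`. -/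
noncomputable def capacity {𝓧 𝓨 : Type*} [Fintype 𝓧] [Fintype 𝓨]
    (P : 𝓧 → 𝓨 → ℝ) (Z : Set 𝓧) : ℝ :=
  sSup {c | ∃ Q' : 𝓧 → ℝ, IsPMF Q' ∧ (∀ x, 0 < Q' x → x ∈ Z) ∧ c = MI Q' P}

/-- `R_{−1}^{−}(Q)`. -/
noncomputable def Rm1minus {𝓧 𝓨 : Type*} [Fintype 𝓧] [Fintype 𝓨]
    (Q : 𝓧 → ℝ) (P : 𝓧 → 𝓨 → ℝ) : EReal :=
  sInf {v | ∃ V : 𝓨 → 𝓧 → ℝ, IsCondPMF V ∧ AdmissibleAtM1 Q P V ∧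
    v = DTQ (Tm1 Q P) V Q}

/-- `R_{−1}^{+}(Q)`. -/
noncomputable def Rm1plus {𝓧 𝓨 : Type*} [Fintype 𝓧] [Fintype 𝓨]
    (Q : 𝓧 → ℝ) (P : 𝓧 → 𝓨 → ℝ) : EReal :=
  sSup {v | ∃ V : 𝓨 → 𝓧 → ℝ, IsCondPMF V ∧ AdmissibleAtM1 Q P V ∧
    v = DTQ (Tm1 Q P) V Q}

/-- `F_ρ(T∘V, Q) = D(T∘V‖Q∘P) + ρ·D(T∘V‖T×Q)`. -/
noncomputable def Frho {𝓧 𝓨 : Type*} [Fintype 𝓧] [Fintype 𝓨]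
    (ρ : ℝ) (T : 𝓨 → ℝ) (V : 𝓨 → 𝓧 → ℝ) (Q : 𝓧 → ℝ) (P : 𝓧 → 𝓨 → ℝ) : EReal :=
  DQP T V Q P + (ρ : EReal) * DTQ T V Q

/-- the unconstrained penalized minimum
    `min_{T,V} { D(T∘V‖Q∘P) + ρ·(D(T∘V‖T×Q) − R) }`. -/
noncomputable def penMin {𝓧 𝓨 : Type*} [Fintype 𝓧] [Fintype 𝓨]
    (Q : 𝓧 → ℝ) (P : 𝓧 → 𝓨 → ℝ) (R ρ : ℝ) : EReal :=
  sInf {v | ∃ T : 𝓨 → ℝ, ∃ V : 𝓨 → 𝓧 → ℝ, IsPMF T ∧ IsCondPMF V ∧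
    v = DQP T V Q P + (ρ : EReal) * (DTQ T V Q - (R : EReal))}

/-- the support-constrained penalized minimum
    `min_{T,V : supp(V) ⊆ supp(Q)} { D(T∘V‖Q∘P) − ρ·(R − D(T∘V‖T×Q)) }`. -/
noncomputable def penMinS {𝓧 𝓨 : Type*} [Fintype 𝓧] [Fintype 𝓨]
    (Q : 𝓧 → ℝ) (P : 𝓧 → 𝓨 → ℝ) (R ρ : ℝ) : EReal :=
  sInf {v | ∃ T : 𝓨 → ℝ, ∃ V : 𝓨 → 𝓧 → ℝ, IsPMF T ∧ IsCondPMF V ∧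
    (∀ y x, Q x = 0 → V y x = 0) ∧
    v = DQP T V Q P - (ρ : EReal) * ((R : EReal) - DTQ T V Q)}

set_option linter.unusedSectionVars false

/-! ### Gibbs' inequality -/

lemma gibbs_term {p q : ℝ} (hp : 0 ≤ p) (hq : 0 ≤ q) (hpq : q = 0 → p = 0) :
    p - q ≤ p * Real.log (p / q) ∧ (p * Real.log (p / q) = p - q → p = q) := by
  rcases hq.eq_or_lt with h | h
  · have hp0 := hpq h.symm
    subst hp0; subst h; simp
  · have key : p * Real.log (p / q) - (p - q) = q * InformationTheory.klFun (p / q) := by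
      unfold InformationTheory.klFun; field_simp; ring
    have hr : 0 ≤ p / q := by positivity
    have h0 := mul_nonneg h.le (InformationTheory.klFun_nonneg hr)
    refine ⟨by linarith, fun he => ?_⟩
    have h1 : q * InformationTheory.klFun (p / q) = 0 := by linarith
    have h2 := (InformationTheory.klFun_eq_zero_iff hr).1
      ((mul_eq_zero.1 h1).resolve_left h.ne')
    field_simp at h2; exact h2

lemma gibbs {α : Type*} [Fintype α] {p q : α → ℝ} (hp : IsPMF p) (hq : IsPMF q)
    (hpq : ∀ a, q a = 0 → p a = 0) :
    0 ≤ ∑ a, p a * Real.log (p a / q a) ∧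
      (∑ a, p a * Real.log (p a / q a) = 0 → ∀ a, p a = q a) := by
  have hn : ∀ a ∈ Finset.univ, 0 ≤ p a * Real.log (p a / q a) - (p a - q a) := fun a _ => by
    linarith [(gibbs_term (hp.1 a) (hq.1 a) (hpq a)).1]
  have hs : ∑ a, (p a * Real.log (p a / q a) - (p a - q a)) = ∑ a, p a * Real.log (p a / q a) := by
    rw [Finset.sum_sub_distrib, Finset.sum_sub_distrib, hp.2, hq.2]; ring
  refine ⟨hs ▸ Finset.sum_nonneg hn, fun h0 a => ?_⟩
  rw [← hs, Finset.sum_eq_zero_iff_of_nonneg hn] at h0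
  exact (gibbs_term (hp.1 a) (hq.1 a) (hpq a)).2 (by linarith [h0 a (Finset.mem_univ a)])

/-! ### Real-valued divergences -/

section
variable {𝓧 𝓨 : Type*} [Fintype 𝓧] [Fintype 𝓨]

/-- `T∘V` is absolutely continuous with respect to `Q∘P`. -/
def AbsCont (T : 𝓨 → ℝ) (V : 𝓨 → 𝓧 → ℝ) (Q : 𝓧 → ℝ) (P : 𝓧 → 𝓨 → ℝ) : Prop :=
  ∀ y x, Q x * P x y = 0 → T y * V y x = 0

/-- `D(T∘V‖Q∘P)` as a real number; the correct value when `AbsCont T V Q P`. -/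
noncomputable def KA (T : 𝓨 → ℝ) (V : 𝓨 → 𝓧 → ℝ) (Q : 𝓧 → ℝ) (P : 𝓧 → 𝓨 → ℝ) : ℝ :=
  ∑ y, ∑ x, T y * V y x * Real.log (T y * V y x / (Q x * P x y))

/-- `D(T∘V‖T×Q)` as a real number; the correct value when the support of each `V(·|y)` with
`T(y) > 0` lies in that of `Q`. -/
noncomputable def KB (T : 𝓨 → ℝ) (V : 𝓨 → 𝓧 → ℝ) (Q : 𝓧 → ℝ) : ℝ :=
  ∑ y, ∑ x, T y * (V y x * Real.log (V y x / Q x))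

lemma klTerm_ne_bot (s t : ℝ) : klTerm s t ≠ ⊥ := by
  unfold klTerm; split_ifs
  · simp
  · simp
  · exact EReal.coe_ne_bot _

lemma ereal_sum_ne_bot {ι : Type*} (s : Finset ι) (f : ι → EReal) (h : ∀ i, f i ≠ ⊥) :
    ∑ i ∈ s, f i ≠ ⊥ := by
  classical
  induction s using Finset.induction_on with
  | empty => simp
  | insert a s ha ih =>
    rw [Finset.sum_insert ha]
    simp [EReal.add_eq_bot_iff, h, ih]

lemma ereal_sum_eq_top {ι : Type*} [Fintype ι] (f : ι → EReal) (h : ∀ i, f i ≠ ⊥) (i : ι)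
    (hi : f i = ⊤) : ∑ i, f i = ⊤ := by
  classical
  rw [← Finset.add_sum_erase _ _ (Finset.mem_univ i), hi]
  exact EReal.top_add_of_ne_bot (ereal_sum_ne_bot _ _ h)

lemma ereal_coe_sum {ι : Type*} (s : Finset ι) (f : ι → ℝ) :
    ((∑ i ∈ s, f i : ℝ) : EReal) = ∑ i ∈ s, (f i : EReal) := by
  classical
  induction s using Finset.induction_on with
  | empty => simp
  | insert a s ha ih => rw [Finset.sum_insert ha, Finset.sum_insert ha, EReal.coe_add, ih]

lemma DQP_eq {T : 𝓨 → ℝ} {V : 𝓨 → 𝓧 → ℝ} {Q : 𝓧 → ℝ} {P : 𝓧 → 𝓨 → ℝ}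
    (h : AbsCont T V Q P) : DQP T V Q P = (KA T V Q P : EReal) := by
  unfold DQP KA
  simp only [ereal_coe_sum]
  refine Finset.sum_congr rfl fun y _ => Finset.sum_congr rfl fun x _ => ?_
  unfold klTerm
  split_ifs with h1 h2
  · simp [h1]
  · exact absurd (h y x h2) h1
  · rfl

lemma DQP_eq_top {T : 𝓨 → ℝ} {V : 𝓨 → 𝓧 → ℝ} {Q : 𝓧 → ℝ} {P : 𝓧 → 𝓨 → ℝ}
    (h : ¬ AbsCont T V Q P) : DQP T V Q P = ⊤ := by
  unfold AbsCont at h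
  push Not at h
  obtain ⟨y, x, h1, h2⟩ := h
  refine ereal_sum_eq_top _ (fun _ => ereal_sum_ne_bot _ _ fun _ => klTerm_ne_bot _ _) y ?_
  refine ereal_sum_eq_top _ (fun _ => klTerm_ne_bot _ _) x ?_
  simp [klTerm, h1, h2]

lemma DTQ_eq {T : 𝓨 → ℝ} {V : 𝓨 → 𝓧 → ℝ} {Q : 𝓧 → ℝ}
    (h : ∀ y x, Q x = 0 → T y * V y x = 0) : DTQ T V Q = (KB T V Q : EReal) := by
  unfold DTQ KB
  simp only [ereal_coe_sum]
  refine Finset.sum_congr rfl fun y _ => Finset.sum_congr rfl fun x _ => ?_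
  unfold klTerm
  split_ifs with h1 h2
  · rcases mul_eq_zero.1 h1 with h | h <;> simp [h]
  · have hT : T y ≠ 0 := left_ne_zero_of_mul h1
    exact absurd (h y x ((mul_eq_zero.1 h2).resolve_left hT)) h1
  · have hT : T y ≠ 0 := left_ne_zero_of_mul h1
    rw [mul_div_mul_left _ _ hT, mul_assoc]

lemma AbsCont.left {T : 𝓨 → ℝ} {V : 𝓨 → 𝓧 → ℝ} {Q : 𝓧 → ℝ} {P : 𝓧 → 𝓨 → ℝ}
    (h : AbsCont T V Q P) : ∀ y x, Q x = 0 → T y * V y x = 0 :=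
  fun y x hx => h y x (by simp [hx])

lemma continuous_mul_log_div (q : ℝ) : Continuous fun v : ℝ => v * Real.log (v / q) := by
  by_cases hq : q = 0
  · simp only [hq, div_zero, Real.log_zero, mul_zero]; exact continuous_const
  · have : (fun v : ℝ => v * Real.log (v / q)) = fun v => q * (v / q * Real.log (v / q)) := by
      funext v; field_simp
    rw [this]
    exact continuous_const.mul (Real.continuous_mul_log.comp (continuous_id.div_const q))

/-! ### The tilted distributions -/

/-- `r ^ (1/s)`, extended to `s = 0` by its limit for `r ∈ [0,1]`. -/
noncomputable def phi (s r : ℝ) : ℝ := if s = 0 then (if r = 1 then 1 else 0) else r ^ (1 / s)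

/-- The unnormalised tilted weight `Q(x) (P(y|x) / max P(y|·))^{1/s}`, where `s = 1 + ρ`. Dividing
by the maximum keeps the weight continuous down to `s = 0`. -/
noncomputable def ww (Q : 𝓧 → ℝ) (P : 𝓧 → 𝓨 → ℝ) (s : ℝ) (y : 𝓨) (x : 𝓧) : ℝ :=
  Q x * phi s (P x y / maxP Q P y)

/-- The normalising constant of `ww`. -/
noncomputable def hh (Q : 𝓧 → ℝ) (P : 𝓧 → 𝓨 → ℝ) (s : ℝ) (y : 𝓨) : ℝ := ∑ x, ww Q P s y x

/-- `exp (-E₀(s - 1, Q))`. -/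
noncomputable def gg (Q : 𝓧 → ℝ) (P : 𝓧 → 𝓨 → ℝ) (s : ℝ) : ℝ :=
  ∑ y, maxP Q P y * hh Q P s y ^ s

/-- The distribution `T_ρ` with `ρ = s - 1`, including `ρ = -1`. -/
noncomputable def TT (Q : 𝓧 → ℝ) (P : 𝓧 → 𝓨 → ℝ) (s : ℝ) (y : 𝓨) : ℝ :=
  maxP Q P y * hh Q P s y ^ s / gg Q P s

/-- The conditional distribution `V_ρ` with `ρ = s - 1`; at `ρ = -1` it is `Q` conditioned on the
argmax set. Where `maxP` vanishes the value is irrelevant and is set to `Q`. -/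
noncomputable def VV (Q : 𝓧 → ℝ) (P : 𝓧 → 𝓨 → ℝ) (s : ℝ) (y : 𝓨) (x : 𝓧) : ℝ :=
  if maxP Q P y = 0 then Q x else ww Q P s y x / hh Q P s y

lemma phi_one (s : ℝ) : phi s 1 = 1 := by simp [phi]

lemma phi_nonneg (s : ℝ) {r : ℝ} (hr : 0 ≤ r) : 0 ≤ phi s r := by
  unfold phi; split_ifs <;> positivity

lemma phi_pos {s r : ℝ} (hs : s ≠ 0) (hr : 0 < r) : 0 < phi s r := by
  unfold phi; rw [if_neg hs]; positivity

lemma phi_continuousOn {r : ℝ} (h0 : 0 ≤ r) (h1 : r ≤ 1) :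
    ContinuousOn (fun s => phi s r) (Set.Icc 0 1) := by
  rcases h1.eq_or_lt with rfl | h1
  · simp only [phi_one]; exact continuousOn_const
  intro s hs
  rcases hs.1.eq_or_lt with h | h
  · subst h
    rw [← continuousWithinAt_sdiff_self]
    have hz : phi 0 r = 0 := by simp [phi, h1.ne]
    change Tendsto _ _ (𝓝 (phi 0 r))
    rw [hz]
    have ht : Tendsto (fun s : ℝ => r ^ (s⁻¹)) (𝓝[>] 0) (𝓝 0) :=
      (tendsto_rpow_atTop_of_base_lt_one r (by linarith) h1).comp tendsto_inv_nhdsGT_zero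
    have hsub : Set.Icc (0 : ℝ) 1 \ {0} ⊆ Set.Ioi 0 := fun t ht =>
      Set.mem_Ioi.2 (lt_of_le_of_ne ht.1.1 (Ne.symm ht.2))
    refine (ht.mono_left (nhdsWithin_mono _ hsub)).congr' ?_
    filter_upwards [self_mem_nhdsWithin] with t ht
    have : t ≠ 0 := ht.2
    simp [phi, this]
  · have : ContinuousAt (fun s : ℝ => r ^ (1 / s)) s :=
      ContinuousAt.rpow continuousAt_const
        (continuousAt_const.div continuousAt_id h.ne') (Or.inr (by simpa using h))
    refine ContinuousAt.continuousWithinAt (this.congr ?_)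
    filter_upwards [lt_mem_nhds h] with t ht
    simp [phi, ht.ne']

variable {Q : 𝓧 → ℝ} {P : 𝓧 → 𝓨 → ℝ}

lemma IsPMF.exists_pos {α : Type*} [Fintype α] {f : α → ℝ} (hf : IsPMF f) : ∃ a, 0 < f a := by
  by_contra! h
  have := Finset.sum_nonpos fun a (_ : a ∈ Finset.univ) => h a
  linarith [hf.2]

lemma le_maxP {x : 𝓧} (hx : 0 < Q x) (y : 𝓨) : P x y ≤ maxP Q P y :=
  le_ciSup (f := fun x : {x // 0 < Q x} => P x.1 y) (Set.finite_range _).bddAbove ⟨x, hx⟩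

lemma exists_maxP (hQ : IsPMF Q) (y : 𝓨) : ∃ x, 0 < Q x ∧ P x y = maxP Q P y := by
  obtain ⟨x0, h0⟩ := hQ.exists_pos
  have : Nonempty {x // 0 < Q x} := ⟨⟨x0, h0⟩⟩
  obtain ⟨x, hx⟩ := exists_eq_ciSup_of_finite (f := fun x : {x // 0 < Q x} => P x.1 y)
  exact ⟨x.1, x.2, hx⟩

lemma argmax_iff (hQ : IsPMF Q) {x : 𝓧} {y : 𝓨} :
    (0 < Q x ∧ ∀ a, 0 < Q a → P a y ≤ P x y) ↔ (0 < Q x ∧ P x y = maxP Q P y) := by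
  constructor
  · rintro ⟨h1, h2⟩
    obtain ⟨a, ha, he⟩ := exists_maxP (P := P) hQ y
    exact ⟨h1, le_antisymm (le_maxP h1 y) (he ▸ h2 a ha)⟩
  · rintro ⟨h1, h2⟩
    exact ⟨h1, fun a ha => h2 ▸ le_maxP ha y⟩

lemma maxP_nonneg (hP : IsChannel P) (hQ : IsPMF Q) (y : 𝓨) : 0 ≤ maxP Q P y := by
  obtain ⟨a, _, he⟩ := exists_maxP (P := P) hQ y
  exact he ▸ (hP a).1 y

lemma ww_nonneg (hP : IsChannel P) (hQ : IsPMF Q) (s : ℝ) (y : 𝓨) (x : 𝓧) :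
    0 ≤ ww Q P s y x :=
  mul_nonneg (hQ.1 x) (phi_nonneg _ (div_nonneg ((hP x).1 y) (maxP_nonneg hP hQ y)))

lemma hh_nonneg (hP : IsChannel P) (hQ : IsPMF Q) (s : ℝ) (y : 𝓨) : 0 ≤ hh Q P s y :=
  Finset.sum_nonneg fun x _ => ww_nonneg hP hQ s y x

lemma hh_pos (hP : IsChannel P) (hQ : IsPMF Q) (s : ℝ) {y : 𝓨} (hM : maxP Q P y ≠ 0) :
    0 < hh Q P s y := by
  obtain ⟨x, hx, he⟩ := exists_maxP (P := P) hQ y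
  refine Finset.sum_pos' (fun x _ => ww_nonneg hP hQ s y x) ⟨x, Finset.mem_univ _, ?_⟩
  rw [ww, he, div_self hM, phi_one]; simpa using hx

lemma gg_pos (hP : IsChannel P) (hQ : IsPMF Q) (s : ℝ) : 0 < gg Q P s := by
  obtain ⟨x, hx⟩ := hQ.exists_pos
  obtain ⟨y, hy⟩ := (hP x).exists_pos
  have hM : 0 < maxP Q P y := hy.trans_le (le_maxP hx y)
  refine Finset.sum_pos' (fun y _ => ?_) ⟨y, Finset.mem_univ _, ?_⟩
  · exact mul_nonneg (maxP_nonneg hP hQ y)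
      (Real.rpow_nonneg (hh_nonneg hP hQ s y) _)
  · exact mul_pos hM (Real.rpow_pos_of_pos (hh_pos hP hQ s hM.ne') _)

lemma TT_pmf (hP : IsChannel P) (hQ : IsPMF Q) (s : ℝ) : IsPMF (TT Q P s) := by
  constructor
  · intro y
    exact div_nonneg (mul_nonneg (maxP_nonneg hP hQ y)
      (Real.rpow_nonneg (hh_nonneg hP hQ s y) _))
      (gg_pos hP hQ s).le
  · unfold TT
    rw [← Finset.sum_div]
    exact div_self (gg_pos hP hQ s).ne'

lemma VV_pmf (hP : IsChannel P) (hQ : IsPMF Q) (s : ℝ) : IsCondPMF (VV Q P s) := by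
  intro y
  by_cases hM : maxP Q P y = 0
  · have : VV Q P s y = Q := by funext x; simp [VV, hM]
    rwa [this]
  · constructor
    · intro x
      simp only [VV, if_neg hM]
      exact div_nonneg (ww_nonneg hP hQ s y x) (hh_pos hP hQ s hM).le
    · simp only [VV, if_neg hM]
      rw [← Finset.sum_div]
      exact div_self (hh_pos hP hQ s hM).ne'

lemma TT_eq_zero (hP : IsChannel P) (hQ : IsPMF Q) (s : ℝ) {y : 𝓨} :
    TT Q P s y = 0 ↔ maxP Q P y = 0 := by
  constructor
  · intro h
    by_contra hM
    have h1 := hh_pos hP hQ s hM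
    have h2 := gg_pos hP hQ s
    have h3 : maxP Q P y * hh Q P s y ^ s / gg Q P s ≠ 0 := by positivity
    exact h3 h
  · intro h; simp [TT, h]

lemma ww_continuousOn (hP : IsChannel P) (hQ : IsPMF Q) (y : 𝓨) (x : 𝓧) :
    ContinuousOn (fun s => ww Q P s y x) (Set.Icc 0 1) := by
  rcases (hQ.1 x).eq_or_lt with h | h
  · simp only [ww, ← h, zero_mul]; exact continuousOn_const
  · have hM := maxP_nonneg hP hQ y
    exact continuousOn_const.mul (phi_continuousOn (div_nonneg ((hP x).1 y) hM)
      (div_le_one_of_le₀ (le_maxP h y) hM))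

lemma hh_continuousOn (hP : IsChannel P) (hQ : IsPMF Q) (y : 𝓨) :
    ContinuousOn (fun s => hh Q P s y) (Set.Icc 0 1) :=
  continuousOn_finsetSum _ fun x _ => ww_continuousOn hP hQ y x

lemma Mh_continuousOn (hP : IsChannel P) (hQ : IsPMF Q) (y : 𝓨) :
    ContinuousOn (fun s => maxP Q P y * hh Q P s y ^ s) (Set.Icc 0 1) := by
  by_cases hM : maxP Q P y = 0
  · simp only [hM, zero_mul]; exact continuousOn_const
  · exact continuousOn_const.mul ((hh_continuousOn hP hQ y).rpow continuousOn_id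
      fun s _ => Or.inl (hh_pos hP hQ s hM).ne')

lemma gg_continuousOn (hP : IsChannel P) (hQ : IsPMF Q) :
    ContinuousOn (gg Q P) (Set.Icc 0 1) :=
  continuousOn_finsetSum _ fun y _ => Mh_continuousOn hP hQ y

lemma TT_continuousOn (hP : IsChannel P) (hQ : IsPMF Q) (y : 𝓨) :
    ContinuousOn (fun s => TT Q P s y) (Set.Icc 0 1) :=
  (Mh_continuousOn hP hQ y).div (gg_continuousOn hP hQ) fun s _ => (gg_pos hP hQ s).ne'

lemma VV_continuousOn (hP : IsChannel P) (hQ : IsPMF Q) (y : 𝓨) (x : 𝓧) :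
    ContinuousOn (fun s => VV Q P s y x) (Set.Icc 0 1) := by
  by_cases hM : maxP Q P y = 0
  · simp only [VV, if_pos hM]; exact continuousOn_const
  · simp only [VV, if_neg hM]
    exact (ww_continuousOn hP hQ y x).div (hh_continuousOn hP hQ y)
      fun s _ => (hh_pos hP hQ s hM).ne'

lemma KB_continuousOn (hP : IsChannel P) (hQ : IsPMF Q) :
    ContinuousOn (fun s => KB (TT Q P s) (VV Q P s) Q) (Set.Icc 0 1) :=
  continuousOn_finsetSum _ fun y _ => continuousOn_finsetSum _ fun x _ =>
    (TT_continuousOn hP hQ y).mul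
      ((continuous_mul_log_div (Q x)).comp_continuousOn (VV_continuousOn hP hQ y x))

/-! ### Gap in the duality inequality -/

/-- Absolute continuity with respect to `Q∘P` makes everything positive on the support. -/
lemma AbsCont.pos (hP : IsChannel P) (hQ : IsPMF Q) {T : 𝓨 → ℝ} {V : 𝓨 → 𝓧 → ℝ}
    (hT : IsPMF T) (hV : IsCondPMF V) (h : AbsCont T V Q P) {y : 𝓨} {x : 𝓧}
    (hne : T y * V y x ≠ 0) :
    0 < T y ∧ 0 < V y x ∧ 0 < Q x ∧ 0 < P x y ∧ 0 < maxP Q P y := by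
  have h1 : Q x * P x y ≠ 0 := fun h0 => hne (h y x h0)
  have hq := (hQ.1 x).lt_of_ne' (left_ne_zero_of_mul h1)
  have hp := ((hP x).1 y).lt_of_ne' (right_ne_zero_of_mul h1)
  exact ⟨(hT.1 y).lt_of_ne' (left_ne_zero_of_mul hne),
    ((hV y).1 x).lt_of_ne' (right_ne_zero_of_mul hne), hq, hp, hp.trans_le (le_maxP hq y)⟩

lemma AbsCont.maxP_ne (hP : IsChannel P) (hQ : IsPMF Q) {T : 𝓨 → ℝ} {V : 𝓨 → 𝓧 → ℝ}
    (hT : IsPMF T) (hV : IsCondPMF V) (h : AbsCont T V Q P) {y : 𝓨} (hy : T y ≠ 0) :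
    maxP Q P y ≠ 0 := by
  obtain ⟨x, hx⟩ := (hV y).exists_pos
  exact (h.pos hP hQ hT hV (mul_ne_zero hy hx.ne')).2.2.2.2.ne'

/-- Termwise identities sum up to a global one because `T∘V` has total mass one. -/
lemma sum_identity {T : 𝓨 → ℝ} {V : 𝓨 → 𝓧 → ℝ} (hT : IsPMF T) (hV : IsCondPMF V)
    {c d : ℝ} {a b e : 𝓨 → 𝓧 → ℝ} {f : 𝓨 → ℝ}
    (h : ∀ y x, a y x + d * b y x = T y * V y x * c + V y x * f y + e y x) :
    ∑ y, ∑ x, a y x + d * ∑ y, ∑ x, b y x = c + ∑ y, f y + ∑ y, ∑ x, e y x := by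
  have h1 : ∀ y, ∑ x, a y x + d * ∑ x, b y x = T y * c + f y + ∑ x, e y x := by
    intro y
    rw [Finset.mul_sum, ← Finset.sum_add_distrib, Finset.sum_congr rfl fun x _ => h y x,
      Finset.sum_add_distrib, Finset.sum_add_distrib, ← Finset.sum_mul, ← Finset.sum_mul,
      ← Finset.mul_sum, (hV y).2]
    ring
  rw [Finset.mul_sum, ← Finset.sum_add_distrib, Finset.sum_congr rfl fun y _ => h1 y,
    Finset.sum_add_distrib, Finset.sum_add_distrib, ← Finset.sum_mul, hT.2, one_mul]

/-- For `s = 1 + ρ > 0` the penalised objective exceeds `E₀(ρ,Q)` by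
`D(T‖T_ρ) + s D(V‖V_ρ|T)`. -/
lemma gap_pos (hP : IsChannel P) (hQ : IsPMF Q) {T : 𝓨 → ℝ} {V : 𝓨 → 𝓧 → ℝ}
    (hT : IsPMF T) (hV : IsCondPMF V) (h : AbsCont T V Q P) {s : ℝ} (hs : 0 < s) :
    KA T V Q P + (s - 1) * KB T V Q = -Real.log (gg Q P s)
      + ∑ y, T y * Real.log (T y / TT Q P s y)
      + ∑ y, ∑ x, s * (T y * (V y x * Real.log (V y x / VV Q P s y x))) := by
  refine sum_identity hT hV fun y x => ?_
  by_cases hne : T y * V y x = 0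
  · rcases mul_eq_zero.1 hne with h0 | h0 <;> simp [h0]
  obtain ⟨h1, h2, h3, h4, h5⟩ := h.pos hP hQ hT hV hne
  have h6 := hh_pos hP hQ s h5.ne'
  have h7 := gg_pos hP hQ s
  have h8 : 0 < phi s (P x y / maxP Q P y) := phi_pos hs.ne' (div_pos h4 h5)
  have h9 : s * Real.log (phi s (P x y / maxP Q P y)) = Real.log (P x y) - Real.log (maxP Q P y) := by
    rw [phi, if_neg hs.ne', Real.log_rpow (div_pos h4 h5), Real.log_div h4.ne' h5.ne']
    field_simp
  have hh := Real.rpow_pos_of_pos h6 s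
  rw [TT, VV, if_neg h5.ne', ww]
  rw [Real.log_div (by positivity) (by positivity), Real.log_mul h1.ne' h2.ne',
    Real.log_mul h3.ne' h4.ne', Real.log_div h2.ne' h3.ne', Real.log_div h1.ne' (by positivity),
    Real.log_div (by positivity) h7.ne', Real.log_mul h5.ne' hh.ne', Real.log_rpow h6,
    Real.log_div h2.ne' (by positivity), Real.log_div (by positivity) h6.ne',
    Real.log_mul h3.ne' h8.ne']
  linear_combination (T y * V y x) * h9

/-- For `ρ = -1` the gap is `D(T‖T_{-1})` plus the mean of `log (max P(y|·) / P(y|x))`. -/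
lemma gap_zero (hP : IsChannel P) (hQ : IsPMF Q) {T : 𝓨 → ℝ} {V : 𝓨 → 𝓧 → ℝ}
    (hT : IsPMF T) (hV : IsCondPMF V) (h : AbsCont T V Q P) :
    KA T V Q P + (0 - 1) * KB T V Q = -Real.log (gg Q P 0)
      + ∑ y, T y * Real.log (T y / TT Q P 0 y)
      + ∑ y, ∑ x, T y * V y x * Real.log (maxP Q P y / P x y) := by
  refine sum_identity hT hV fun y x => ?_
  by_cases hne : T y * V y x = 0
  · rcases mul_eq_zero.1 hne with h0 | h0 <;> simp [h0]
  obtain ⟨h1, h2, h3, h4, h5⟩ := h.pos hP hQ hT hV hne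
  have h7 := gg_pos hP hQ 0
  rw [TT, Real.rpow_zero, mul_one]
  rw [Real.log_div (by positivity) (by positivity), Real.log_mul h1.ne' h2.ne',
    Real.log_mul h3.ne' h4.ne', Real.log_div h2.ne' h3.ne', Real.log_div h1.ne' (by positivity),
    Real.log_div (by positivity) h7.ne', Real.log_div h5.ne' h4.ne']
  ring

lemma TT_gibbs (hP : IsChannel P) (hQ : IsPMF Q) {T : 𝓨 → ℝ} {V : 𝓨 → 𝓧 → ℝ}
    (hT : IsPMF T) (hV : IsCondPMF V) (h : AbsCont T V Q P) (s : ℝ) :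
    0 ≤ ∑ y, T y * Real.log (T y / TT Q P s y) ∧
      (∑ y, T y * Real.log (T y / TT Q P s y) = 0 → ∀ y, T y = TT Q P s y) :=
  gibbs hT (TT_pmf hP hQ s) fun y hy => by
    by_contra h0
    exact h.maxP_ne hP hQ hT hV h0 ((TT_eq_zero hP hQ s).1 hy)

lemma VV_gibbs (hP : IsChannel P) (hQ : IsPMF Q) {T : 𝓨 → ℝ} {V : 𝓨 → 𝓧 → ℝ}
    (hT : IsPMF T) (hV : IsCondPMF V) (h : AbsCont T V Q P) {s : ℝ} (hs : 0 < s) {y : 𝓨}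
    (hy : T y ≠ 0) :
    0 ≤ ∑ x, V y x * Real.log (V y x / VV Q P s y x) ∧
      (∑ x, V y x * Real.log (V y x / VV Q P s y x) = 0 → ∀ x, V y x = VV Q P s y x) := by
  refine gibbs (hV y) (VV_pmf hP hQ s y) fun x hx => ?_
  by_contra h0
  obtain ⟨-, -, h3, h4, h5⟩ := h.pos hP hQ hT hV (mul_ne_zero hy h0)
  have h6 := hh_pos hP hQ s h5.ne'
  have h8 : 0 < phi s (P x y / maxP Q P y) := phi_pos hs.ne' (div_pos h4 h5)
  rw [VV, if_neg h5.ne', ww] at hx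
  have : Q x * phi s (P x y / maxP Q P y) / hh Q P s y ≠ 0 := by positivity
  exact this hx

lemma duality_pos (hP : IsChannel P) (hQ : IsPMF Q) {T : 𝓨 → ℝ} {V : 𝓨 → 𝓧 → ℝ}
    (hT : IsPMF T) (hV : IsCondPMF V) (h : AbsCont T V Q P) {s : ℝ} (hs : 0 < s) :
    -Real.log (gg Q P s) ≤ KA T V Q P + (s - 1) * KB T V Q ∧
    (KA T V Q P + (s - 1) * KB T V Q = -Real.log (gg Q P s) →
      ∀ y x, T y * V y x = TT Q P s y * VV Q P s y x) := by
  have h1 := TT_gibbs hP hQ hT hV h s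
  have hn : ∀ y ∈ Finset.univ,
      0 ≤ ∑ x, s * (T y * (V y x * Real.log (V y x / VV Q P s y x))) := by
    intro y _
    rw [← Finset.mul_sum, ← Finset.mul_sum]
    by_cases hy : T y = 0
    · simp [hy]
    · exact mul_nonneg hs.le (mul_nonneg (hT.1 y) (VV_gibbs hP hQ hT hV h hs hy).1)
  have h2 := Finset.sum_nonneg hn
  rw [gap_pos hP hQ hT hV h hs]
  refine ⟨by linarith [h1.1], fun he y x => ?_⟩
  have e1 := h1.2 (by linarith [h1.1])
  have e2 : ∑ y, ∑ x, s * (T y * (V y x * Real.log (V y x / VV Q P s y x))) = 0 := by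
    linarith [h1.1]
  rw [Finset.sum_eq_zero_iff_of_nonneg hn] at e2
  rw [← e1 y]
  by_cases hy : T y = 0
  · simp [hy]
  · have e3 := e2 y (Finset.mem_univ y)
    rw [← Finset.mul_sum, ← Finset.mul_sum] at e3
    have e4 := (mul_eq_zero.1 ((mul_eq_zero.1 e3).resolve_left hs.ne')).resolve_left hy
    rw [(VV_gibbs hP hQ hT hV h hs hy).2 e4 x]

lemma duality_zero (hP : IsChannel P) (hQ : IsPMF Q) {T : 𝓨 → ℝ} {V : 𝓨 → 𝓧 → ℝ}
    (hT : IsPMF T) (hV : IsCondPMF V) (h : AbsCont T V Q P) :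
    -Real.log (gg Q P 0) ≤ KA T V Q P + (0 - 1) * KB T V Q ∧
    (KA T V Q P + (0 - 1) * KB T V Q = -Real.log (gg Q P 0) →
      (∀ y, T y = TT Q P 0 y) ∧
      ∀ y x, T y * V y x ≠ 0 → 0 < Q x ∧ P x y = maxP Q P y) := by
  have h1 := TT_gibbs hP hQ hT hV h 0
  have hlog : ∀ y x, T y * V y x ≠ 0 → 0 ≤ Real.log (maxP Q P y / P x y) := by
    intro y x hne
    obtain ⟨-, -, h3, h4, h5⟩ := h.pos hP hQ hT hV hne
    exact Real.log_nonneg ((one_le_div h4).2 (le_maxP h3 y))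
  have hn : ∀ y, ∀ x ∈ Finset.univ, 0 ≤ T y * V y x * Real.log (maxP Q P y / P x y) := by
    intro y x _
    by_cases hne : T y * V y x = 0
    · simp [hne]
    · exact mul_nonneg (mul_nonneg (hT.1 y) ((hV y).1 x)) (hlog y x hne)
  have hn' : ∀ y ∈ Finset.univ, 0 ≤ ∑ x, T y * V y x * Real.log (maxP Q P y / P x y) :=
    fun y _ => Finset.sum_nonneg (hn y)
  have h2 := Finset.sum_nonneg hn'
  rw [gap_zero hP hQ hT hV h]
  refine ⟨by linarith [h1.1], fun he => ⟨h1.2 (by linarith [h1.1]), fun y x hne => ?_⟩⟩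
  have e2 : ∑ y, ∑ x, T y * V y x * Real.log (maxP Q P y / P x y) = 0 := by linarith [h1.1]
  rw [Finset.sum_eq_zero_iff_of_nonneg hn'] at e2
  have e3 := e2 y (Finset.mem_univ y)
  rw [Finset.sum_eq_zero_iff_of_nonneg (hn y)] at e3
  have e4 := (mul_eq_zero.1 (e3 x (Finset.mem_univ x))).resolve_left hne
  obtain ⟨-, -, h3, h4, h5⟩ := h.pos hP hQ hT hV hne
  refine ⟨h3, ?_⟩
  have e5 := Real.eq_one_of_pos_of_log_eq_zero (div_pos h5 h4) e4
  rw [div_eq_one_iff_eq h4.ne'] at e5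
  exact e5.symm

/-- The lower bound on the penalised objective for all `ρ = s - 1 ≥ -1`, on which weak duality
rests. -/
lemma duality (hP : IsChannel P) (hQ : IsPMF Q) {T : 𝓨 → ℝ} {V : 𝓨 → 𝓧 → ℝ}
    (hT : IsPMF T) (hV : IsCondPMF V) (h : AbsCont T V Q P) {s : ℝ} (hs : 0 ≤ s) :
    -Real.log (gg Q P s) ≤ KA T V Q P + (s - 1) * KB T V Q := by
  rcases hs.eq_or_lt with rfl | hs
  · exact (duality_zero hP hQ hT hV h).1
  · exact (duality_pos hP hQ hT hV h hs).1

/-! ### The tilted distributions close the gap -/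

lemma VV_supp {y : 𝓨} {x : 𝓧} (s : ℝ) (hx : Q x = 0) : VV Q P s y x = 0 := by
  unfold VV ww; split_ifs <;> simp [hx]

lemma tilt_absCont (hP : IsChannel P) (hQ : IsPMF Q) (s : ℝ) :
    AbsCont (TT Q P s) (VV Q P s) Q P := by
  intro y x h
  rcases mul_eq_zero.1 h with h | h
  · rw [VV_supp s h, mul_zero]
  · by_cases hM : maxP Q P y = 0
    · rw [(TT_eq_zero hP hQ s).2 hM, zero_mul]
    · have : phi s 0 = 0 := by
        unfold phi
        split_ifs with h0 h1
        · norm_num at h1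
        · rfl
        · exact Real.zero_rpow (by simpa using h0)
      simp [VV, hM, ww, h, this]

lemma admissible_absCont (hP : IsChannel P) (hQ : IsPMF Q) {V : 𝓨 → 𝓧 → ℝ}
    (hA : AdmissibleAtM1 Q P V) : AbsCont (TT Q P 0) V Q P := by
  intro y x h
  by_cases hc : 0 < Q x ∧ P x y = maxP Q P y
  · have : maxP Q P y = 0 := hc.2 ▸ (mul_eq_zero.1 h).resolve_left hc.1.ne'
    rw [(TT_eq_zero hP hQ 0).2 this, zero_mul]
  · rw [hA y x (by rwa [argmax_iff hQ]), mul_zero]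

/-- At `ρ = -1` every admissible `V` attains equality in `duality`, whatever its rate. -/
lemma admissible_tight (hP : IsChannel P) (hQ : IsPMF Q) {V : 𝓨 → 𝓧 → ℝ} (hV : IsCondPMF V)
    (hA : AdmissibleAtM1 Q P V) :
    KA (TT Q P 0) V Q P + (0 - 1) * KB (TT Q P 0) V Q = -Real.log (gg Q P 0) := by
  have hT := TT_pmf hP hQ 0
  have hc := admissible_absCont hP hQ hA
  rw [gap_zero hP hQ hT hV hc]
  have e1 : ∑ y, TT Q P 0 y * Real.log (TT Q P 0 y / TT Q P 0 y) = 0 :=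
    Finset.sum_eq_zero fun y _ => by simp
  have e2 : ∑ y, ∑ x, TT Q P 0 y * V y x * Real.log (maxP Q P y / P x y) = 0 := by
    refine Finset.sum_eq_zero fun y _ => Finset.sum_eq_zero fun x _ => ?_
    by_cases hne : V y x = 0
    · simp [hne]
    · have : P x y = maxP Q P y := by
        by_contra h0
        exact hne (hA y x (by rw [argmax_iff hQ]; exact fun h => h0 h.2))
      rw [this]; simp
  rw [e1, e2]; ring

lemma VV_zero_admissible (hQ : IsPMF Q) (hP : IsChannel P) : AdmissibleAtM1 Q P (VV Q P 0) := by
  intro y x h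
  rw [argmax_iff hQ] at h
  rcases (hQ.1 x).eq_or_lt with h0 | h0
  · exact VV_supp 0 h0.symm
  have hne : P x y ≠ maxP Q P y := fun he => h ⟨h0, he⟩
  have hM : maxP Q P y ≠ 0 := by
    intro hM
    exact hne (le_antisymm (le_maxP h0 y) (hM ▸ (hP x).1 y))
  have : P x y / maxP Q P y ≠ 1 := by rwa [Ne, div_eq_one_iff_eq hM]
  simp [VV, hM, ww, phi, this]

/-- The tilted distribution attains equality in `duality`. -/
lemma tilt_tight (hP : IsChannel P) (hQ : IsPMF Q) {s : ℝ} (hs : 0 ≤ s) :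
    KA (TT Q P s) (VV Q P s) Q P + (s - 1) * KB (TT Q P s) (VV Q P s) Q
      = -Real.log (gg Q P s) := by
  rcases hs.eq_or_lt with rfl | hs
  · exact admissible_tight hP hQ (VV_pmf hP hQ 0) (VV_zero_admissible hQ hP)
  rw [gap_pos hP hQ (TT_pmf hP hQ s) (VV_pmf hP hQ s) (tilt_absCont hP hQ s) hs]
  have e1 : ∑ y, TT Q P s y * Real.log (TT Q P s y / TT Q P s y) = 0 :=
    Finset.sum_eq_zero fun y _ => by simp
  have e2 : ∑ y, ∑ x, s * (TT Q P s y * (VV Q P s y x *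
      Real.log (VV Q P s y x / VV Q P s y x))) = 0 :=
    Finset.sum_eq_zero fun y _ => Finset.sum_eq_zero fun x _ => by simp
  rw [e1, e2]; ring

/-! ### Comparison with Gallager's function and `Jrho` -/

lemma TT_zero (Q : 𝓧 → ℝ) (P : 𝓧 → 𝓨 → ℝ) : TT Q P 0 = Tm1 Q P := by
  funext y; simp [TT, Tm1, gg]

lemma ww_rescale (hP : IsChannel P) (hQ : IsPMF Q) {s : ℝ} (hs : 0 < s) (y : 𝓨) (x : 𝓧) :
    Q x * P x y ^ (1 / s) = maxP Q P y ^ (1 / s) * ww Q P s y x := by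
  rcases (hQ.1 x).eq_or_lt with h0 | h0
  · simp [ww, ← h0]
  have hM := maxP_nonneg hP hQ y
  rw [ww, phi, if_neg hs.ne']
  have : P x y = maxP Q P y * (P x y / maxP Q P y) := by
    by_cases h : maxP Q P y = 0
    · rw [h, zero_mul]; exact le_antisymm (h ▸ le_maxP h0 y) ((hP x).1 y)
    · field_simp
  rw [mul_left_comm, ← Real.mul_rpow hM (div_nonneg ((hP x).1 y) hM), ← this]

lemma hh_rescale (hP : IsChannel P) (hQ : IsPMF Q) {s : ℝ} (hs : 0 < s) (y : 𝓨) :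
    ∑ x, Q x * P x y ^ (1 / s) = maxP Q P y ^ (1 / s) * hh Q P s y := by
  rw [hh, Finset.mul_sum]
  exact Finset.sum_congr rfl fun x _ => ww_rescale hP hQ hs y x

lemma Mh_rescale (hP : IsChannel P) (hQ : IsPMF Q) {s : ℝ} (hs : 0 < s) (y : 𝓨) :
    (∑ x, Q x * P x y ^ (1 / s)) ^ s = maxP Q P y * hh Q P s y ^ s := by
  have hM := maxP_nonneg hP hQ y
  rw [hh_rescale hP hQ hs, Real.mul_rpow (Real.rpow_nonneg hM _)
    (hh_nonneg hP hQ s y), ← Real.rpow_mul hM,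
    one_div_mul_cancel hs.ne', Real.rpow_one]

lemma gg_eq (hP : IsChannel P) (hQ : IsPMF Q) {s : ℝ} (hs : 0 < s) :
    ∑ y, (∑ x, Q x * P x y ^ (1 / s)) ^ s = gg Q P s :=
  Finset.sum_congr rfl fun y _ => Mh_rescale hP hQ hs y

lemma E0full_eq (hP : IsChannel P) (hQ : IsPMF Q) {ρ : ℝ} (hρ : -1 ≤ ρ) :
    E0full ρ Q P = -Real.log (gg Q P (1 + ρ)) := by
  unfold E0full
  split_ifs with h
  · subst h; simp [E0m1, gg]
  · have : 0 < 1 + ρ := by linarith [lt_of_le_of_ne hρ (Ne.symm h)]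
    rw [E0, gg_eq hP hQ this]

lemma Jrho_eq (hP : IsChannel P) (hQ : IsPMF Q) {ρ : ℝ} (hρ : -1 < ρ) (x : 𝓧) (y : 𝓨) :
    Jrho ρ Q P x y = TT Q P (1 + ρ) y * VV Q P (1 + ρ) y x := by
  have hs : 0 < 1 + ρ := by linarith
  rw [Jrho, gg_eq hP hQ hs, TT, VV, ww_rescale hP hQ hs]
  by_cases hM : maxP Q P y = 0
  · rw [hM, Real.zero_rpow (by simpa using hs.ne')]; simp
  have hMp := (maxP_nonneg hP hQ y).lt_of_ne' hM
  have h6 := hh_pos hP hQ (1 + ρ) hM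
  have h7 := gg_pos hP hQ (1 + ρ)
  have hH : 0 < ∑ a, Q a * P a y ^ (1 / (1 + ρ)) := by
    rw [hh_rescale hP hQ hs]; positivity
  have hHs := Mh_rescale hP hQ hs y
  rw [if_neg hM]
  have key : (∑ a, Q a * P a y ^ (1 / (1 + ρ))) ^ ρ
      = (∑ a, Q a * P a y ^ (1 / (1 + ρ))) ^ (1 + ρ) / (∑ a, Q a * P a y ^ (1 / (1 + ρ))) := by
    rw [Real.rpow_add hH, Real.rpow_one]; field_simp
  rw [key, hHs, hh_rescale hP hQ hs]
  have hMs := Real.rpow_pos_of_pos hMp (1 / (1 + ρ))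
  generalize maxP Q P y ^ (1 / (1 + ρ)) = m at *
  generalize hh Q P (1 + ρ) y ^ (1 + ρ) = k at *
  field_simp

/-! ### The dual maximisation over `s = 1 + ρ` -/

lemma exists_maximizer (hP : IsChannel P) (hQ : IsPMF Q) (R : ℝ) :
    ∃ s ∈ Set.Icc (0 : ℝ) 1,
      IsMaxOn (fun s => -Real.log (gg Q P s) - (s - 1) * R) (Set.Icc 0 1) s := by
  refine isCompact_Icc.exists_isMaxOn ⟨0, by simp⟩ ?_
  refine ContinuousOn.sub ?_ (by fun_prop)
  exact ((gg_continuousOn hP hQ).log fun s _ => (gg_pos hP hQ s).ne').neg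

/-- `D(T_ρ∘V_ρ‖T_ρ×Q)` is a supergradient of the Gallager function at `ρ`. -/
lemma supergradient (hP : IsChannel P) (hQ : IsPMF Q) {s s' : ℝ} (hs : 0 ≤ s) (hs' : 0 ≤ s') :
    -Real.log (gg Q P s') ≤ -Real.log (gg Q P s)
      + (s' - s) * KB (TT Q P s) (VV Q P s) Q := by
  have h1 := duality hP hQ (TT_pmf hP hQ s) (VV_pmf hP hQ s) (tilt_absCont hP hQ s) hs'
  have h2 := tilt_tight hP hQ hs
  linarith

/-- First-order condition at a dual maximiser, obtained without differentiation from the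
supergradients at nearby points and the continuity of `ρ ↦ D(T_ρ∘V_ρ‖T_ρ×Q)`. -/
lemma le_rate (hP : IsChannel P) (hQ : IsPMF Q) {R s : ℝ} (hs : s ∈ Set.Icc (0 : ℝ) 1)
    (hpos : 0 < s)
    (hm : IsMaxOn (fun s => -Real.log (gg Q P s) - (s - 1) * R) (Set.Icc 0 1) s) :
    R ≤ KB (TT Q P s) (VV Q P s) Q := by
  have hnear : ∀ᶠ t in 𝓝[<] s, t ∈ Set.Ioo 0 s := Ioo_mem_nhdsLT hpos
  have hle : 𝓝[<] s ≤ 𝓝[Set.Icc 0 1] s := nhdsWithin_le_of_mem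
    (mem_of_superset hnear fun t ht => ⟨ht.1.le, ht.2.le.trans hs.2⟩)
  refine ge_of_tendsto ((KB_continuousOn hP hQ s hs).tendsto.mono_left hle) ?_
  filter_upwards [hnear] with t ht
  have h1 := supergradient hP hQ ht.1.le hs.1
  have h2 := isMaxOn_iff.1 hm t ⟨ht.1.le, ht.2.le.trans hs.2⟩
  have h3 : 0 < s - t := by linarith [ht.2]
  exact le_of_mul_le_mul_left (by linarith : (s - t) * R ≤ (s - t) * _) h3

/-- The first-order condition on the other side; compare `le_rate`. -/
lemma rate_le (hP : IsChannel P) (hQ : IsPMF Q) {R s : ℝ} (hs : s ∈ Set.Icc (0 : ℝ) 1)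
    (hlt : s < 1)
    (hm : IsMaxOn (fun s => -Real.log (gg Q P s) - (s - 1) * R) (Set.Icc 0 1) s) :
    KB (TT Q P s) (VV Q P s) Q ≤ R := by
  have hnear : ∀ᶠ t in 𝓝[>] s, t ∈ Set.Ioo s 1 := Ioo_mem_nhdsGT hlt
  have hle : 𝓝[>] s ≤ 𝓝[Set.Icc 0 1] s := nhdsWithin_le_of_mem
    (mem_of_superset hnear fun t ht => ⟨hs.1.trans ht.1.le, ht.2.le⟩)
  refine le_of_tendsto ((KB_continuousOn hP hQ s hs).tendsto.mono_left hle) ?_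
  filter_upwards [hnear] with t ht
  have ht0 : 0 ≤ t := hs.1.trans ht.1.le
  have h1 := supergradient hP hQ ht0 hs.1
  have h2 := isMaxOn_iff.1 hm t ⟨ht0, ht.2.le⟩
  have h3 : 0 < t - s := by linarith [ht.1]
  exact le_of_mul_le_mul_left (by linarith : (t - s) * _ ≤ (t - s) * R) h3

lemma tilt_optimal (hP : IsChannel P) (hQ : IsPMF Q) {R s : ℝ} (hs : s ∈ Set.Icc (0 : ℝ) 1)
    (hpos : 0 < s)
    (hm : IsMaxOn (fun s => -Real.log (gg Q P s) - (s - 1) * R) (Set.Icc 0 1) s) :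
    R ≤ KB (TT Q P s) (VV Q P s) Q ∧
      KA (TT Q P s) (VV Q P s) Q P = -Real.log (gg Q P s) - (s - 1) * R := by
  have h1 := le_rate hP hQ hs hpos hm
  refine ⟨h1, ?_⟩
  have h2 := tilt_tight hP hQ hs.1
  -- complementary slackness: either the multiplier vanishes or the constraint is active
  rcases hs.2.eq_or_lt with h | h
  · subst h; linarith
  · rw [le_antisymm (rate_le hP hQ hs h hm) h1] at h2; linarith

/-! ### The endpoint `ρ = -1` -/

lemma isCompact_admissible (Q : 𝓧 → ℝ) (P : 𝓧 → 𝓨 → ℝ) :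
    IsCompact {V : 𝓨 → 𝓧 → ℝ | IsCondPMF V ∧ AdmissibleAtM1 Q P V} := by
  have h1 : IsCompact (Set.univ.pi fun _ : 𝓨 => stdSimplex ℝ 𝓧) :=
    isCompact_univ_pi fun _ => isCompact_stdSimplex ℝ 𝓧
  have h2 : IsClosed {V : 𝓨 → 𝓧 → ℝ | AdmissibleAtM1 Q P V} := by
    simp only [AdmissibleAtM1, Set.ofPred_forall]
    exact isClosed_iInter fun y => isClosed_iInter fun x => isClosed_iInter fun _ =>
      isClosed_eq (by fun_prop) continuous_const
  convert h1.inter_right h2 using 1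
  ext V
  simp [IsCondPMF, IsPMF, stdSimplex]

lemma convex_admissible (Q : 𝓧 → ℝ) (P : 𝓧 → 𝓨 → ℝ) :
    Convex ℝ {V : 𝓨 → 𝓧 → ℝ | IsCondPMF V ∧ AdmissibleAtM1 Q P V} := by
  rintro V ⟨hV, hA⟩ W ⟨hW, hB⟩ a b ha hb hab
  refine ⟨fun y => ⟨fun x => ?_, ?_⟩, fun y x h => ?_⟩
  · have := (hV y).1 x; have := (hW y).1 x
    simp only [Pi.add_apply, Pi.smul_apply, smul_eq_mul]; positivity
  · simp only [Pi.add_apply, Pi.smul_apply, smul_eq_mul]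
    rw [Finset.sum_add_distrib, ← Finset.mul_sum, ← Finset.mul_sum, (hV y).2, (hW y).2]
    linarith
  · simp [hA y x h, hB y x h]

/-- If the dual maximum is at `ρ = -1`, the rate `R` is realised by an admissible `V`: the rates
of admissible `V` form an interval, whose supremum is `R_{-1}^+` and which contains the limit of
the rates of `T_ρ∘V_ρ`. -/
lemma exists_admissible (hP : IsChannel P) (hQ : IsPMF Q) {R : ℝ}
    (hR : (R : EReal) ≤ Rm1plus Q P)
    (hm : IsMaxOn (fun s => -Real.log (gg Q P s) - (s - 1) * R) (Set.Icc 0 1) 0) :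
    ∃ V : 𝓨 → 𝓧 → ℝ, IsCondPMF V ∧ AdmissibleAtM1 Q P V ∧ KB (TT Q P 0) V Q = R := by
  have hcont : Continuous fun V : 𝓨 → 𝓧 → ℝ => KB (TT Q P 0) V Q :=
    continuous_finsetSum _ fun y _ => continuous_finsetSum _ fun x _ =>
      continuous_const.mul ((continuous_mul_log_div (Q x)).comp
        ((continuous_apply x).comp (continuous_apply y)))
  have hV0 : VV Q P 0 ∈ {V : 𝓨 → 𝓧 → ℝ | IsCondPMF V ∧ AdmissibleAtM1 Q P V} :=
    ⟨VV_pmf hP hQ 0, VV_zero_admissible hQ hP⟩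
  obtain ⟨W, hW, hWm⟩ := (isCompact_admissible Q P).exists_isMaxOn ⟨_, hV0⟩ hcont.continuousOn
  have hup : R ≤ KB (TT Q P 0) W Q := by
    have : Rm1plus Q P ≤ (KB (TT Q P 0) W Q : EReal) := by
      refine sSup_le ?_
      rintro v ⟨V, hV, hA, rfl⟩
      rw [← TT_zero, DTQ_eq (admissible_absCont hP hQ hA).left]
      exact_mod_cast isMaxOn_iff.1 hWm V ⟨hV, hA⟩
    exact_mod_cast hR.trans this
  have hlow := rate_le hP hQ (by simp : (0 : ℝ) ∈ Set.Icc (0 : ℝ) 1) one_pos hm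
  obtain ⟨V, hV, he⟩ := (convex_admissible Q P).isPreconnected.intermediate_value hV0 hW
    hcont.continuousOn ⟨hlow, hup⟩
  exact ⟨V, hV.1, hV.2, he⟩

/-! ### Strong duality -/

/-- Strong duality, at any dual maximiser `s = 1 + ρ`. -/
lemma Ec_eq (hP : IsChannel P) (hQ : IsPMF Q) {R s : ℝ} (hR : (R : EReal) ≤ Rm1plus Q P)
    (hs : s ∈ Set.Icc (0 : ℝ) 1)
    (hm : IsMaxOn (fun s => -Real.log (gg Q P s) - (s - 1) * R) (Set.Icc 0 1) s) :
    Ec R Q P = ((-Real.log (gg Q P s) - (s - 1) * R : ℝ) : EReal) := by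
  apply le_antisymm
  · apply sInf_le
    rcases hs.1.eq_or_lt with h | h
    · subst h
      obtain ⟨V, hV, hA, he⟩ := exists_admissible hP hQ hR hm
      have hc := admissible_absCont hP hQ hA
      refine ⟨TT Q P 0, V, TT_pmf hP hQ 0, hV, ?_, ?_⟩
      · rw [DTQ_eq hc.left, he]
      · rw [DQP_eq hc, ← admissible_tight hP hQ hV hA, he]
        ring_nf
    · obtain ⟨h1, h2⟩ := tilt_optimal hP hQ hs h hm
      have hc := tilt_absCont hP hQ s
      refine ⟨TT Q P s, VV Q P s, TT_pmf hP hQ s, VV_pmf hP hQ s, ?_, ?_⟩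
      · rw [DTQ_eq hc.left]; exact_mod_cast h1
      · rw [DQP_eq hc, h2]
  · refine le_sInf ?_
    rintro v ⟨T, V, hT, hV, hRD, rfl⟩
    by_cases hc : AbsCont T V Q P
    · rw [DQP_eq hc]
      rw [DTQ_eq hc.left] at hRD
      have h1 : R ≤ KB T V Q := by exact_mod_cast hRD
      have h2 := duality hP hQ hT hV hc hs.1
      have h3 : (s - 1) * KB T V Q ≤ (s - 1) * R :=
        mul_le_mul_of_nonpos_left h1 (by linarith [hs.2])
      exact_mod_cast (by linarith : -Real.log (gg Q P s) - (s - 1) * R ≤ KA T V Q P)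
    · rw [DQP_eq_top hc]; exact le_top

/-- A feasible pair with finite objective satisfies the constraint and the objective value in
terms of the real-valued divergences. -/
lemma minimizer_real {T : 𝓨 → ℝ} {V : 𝓨 → 𝓧 → ℝ} {R c : ℝ}
    (hR : (R : EReal) ≤ DTQ T V Q) (hD : DQP T V Q P = (c : EReal)) :
    AbsCont T V Q P ∧ R ≤ KB T V Q ∧ KA T V Q P = c := by
  have hc : AbsCont T V Q P := by
    by_contra h
    rw [DQP_eq_top h] at hD
    exact EReal.coe_ne_top c hD.symm
  rw [DQP_eq hc] at hD
  rw [DTQ_eq hc.left] at hR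
  exact ⟨hc, by exact_mod_cast hR, by exact_mod_cast hD⟩

end

theorem stmt_9 {𝓧 𝓨 : Type*} [Fintype 𝓧] [Fintype 𝓨] [Nonempty 𝓧] [Nonempty 𝓨]
    (P : 𝓧 → 𝓨 → ℝ) (hP : IsChannel P) (Q : 𝓧 → ℝ) (hQ : IsPMF Q)
    (R : ℝ) (hR : (R : EReal) ≤ Rm1plus Q P) :
    Ec R Q P
      = ((sSup {e : ℝ | ∃ ρ ∈ Set.Icc (-1 : ℝ) 0, e = E0full ρ Q P - ρ * R} : ℝ) : EReal)
    ∧ ∀ ρ ∈ Set.Icc (-1 : ℝ) 0,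
        E0full ρ Q P - ρ * R
          = sSup {e : ℝ | ∃ ρ' ∈ Set.Icc (-1 : ℝ) 0, e = E0full ρ' Q P - ρ' * R} →
        ((-1 < ρ →
            (∃ T : 𝓨 → ℝ, ∃ V : 𝓨 → 𝓧 → ℝ, IsPMF T ∧ IsCondPMF V ∧
              ((R : EReal) ≤ DTQ T V Q ∧ DQP T V Q P = Ec R Q P) ∧
              ∀ x y, T y * V y x = Jrho ρ Q P x y)
            ∧ ∀ (T : 𝓨 → ℝ) (V : 𝓨 → 𝓧 → ℝ), IsPMF T → IsCondPMF V →
                (R : EReal) ≤ DTQ T V Q → DQP T V Q P = Ec R Q P →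
                ∀ x y, T y * V y x = Jrho ρ Q P x y)
         ∧ (ρ = -1 →
            (∀ (T : 𝓨 → ℝ) (V : 𝓨 → 𝓧 → ℝ), IsPMF T → IsCondPMF V →
                (R : EReal) ≤ DTQ T V Q → DQP T V Q P = Ec R Q P →
                ∃ V' : 𝓨 → 𝓧 → ℝ, IsCondPMF V' ∧ AdmissibleAtM1 Q P V' ∧
                  DTQ (Tm1 Q P) V' Q = (R : EReal) ∧
                  ∀ x y, T y * V y x = Tm1 Q P y * V' y x)
            ∧ ∀ V' : 𝓨 → 𝓧 → ℝ, IsCondPMF V' → AdmissibleAtM1 Q P V' →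
                DTQ (Tm1 Q P) V' Q = (R : EReal) →
                (R : EReal) ≤ DTQ (Tm1 Q P) V' Q
                ∧ DQP (Tm1 Q P) V' Q P = Ec R Q P)) := by
  classical
  have hmap : ∀ {ρ : ℝ}, ρ ∈ Set.Icc (-1 : ℝ) 0 → 1 + ρ ∈ Set.Icc (0 : ℝ) 1 := fun h =>
    ⟨by linarith [h.1], by linarith [h.2]⟩
  have hval : ∀ {ρ : ℝ}, ρ ∈ Set.Icc (-1 : ℝ) 0 →
      E0full ρ Q P - ρ * R = -Real.log (gg Q P (1 + ρ)) - (1 + ρ - 1) * R := fun h => by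
    rw [E0full_eq hP hQ h.1]; ring
  obtain ⟨s₀, hs₀, hm₀⟩ := exists_maximizer hP hQ R
  have hgr : IsGreatest {e : ℝ | ∃ ρ ∈ Set.Icc (-1 : ℝ) 0, e = E0full ρ Q P - ρ * R}
      (-Real.log (gg Q P s₀) - (s₀ - 1) * R) := by
    constructor
    · have h : s₀ - 1 ∈ Set.Icc (-1 : ℝ) 0 := ⟨by linarith [hs₀.1], by linarith [hs₀.2]⟩
      refine ⟨s₀ - 1, h, ?_⟩
      rw [hval h, add_sub_cancel]
    · rintro e ⟨ρ, hρ, rfl⟩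
      rw [hval hρ]
      exact isMaxOn_iff.1 hm₀ _ (hmap hρ)
  have hEc := Ec_eq hP hQ hR hs₀ hm₀
  rw [hgr.csSup_eq]
  refine ⟨hEc, fun ρ hρ hmax => ?_⟩
  rw [hval hρ] at hmax
  have hs := hmap hρ
  have hm : IsMaxOn (fun s => -Real.log (gg Q P s) - (s - 1) * R) (Set.Icc 0 1) (1 + ρ) :=
    isMaxOn_iff.2 fun s h => (isMaxOn_iff.1 hm₀ s h).trans hmax.ge
  rw [hEc, ← hmax]
  refine ⟨fun hρ1 => ⟨?_, ?_⟩, fun hρ1 => ⟨?_, ?_⟩⟩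
  · have hpos : 0 < 1 + ρ := by linarith
    obtain ⟨h1, h2⟩ := tilt_optimal hP hQ hs hpos hm
    have hc := tilt_absCont hP hQ (1 + ρ)
    refine ⟨TT Q P (1 + ρ), VV Q P (1 + ρ), TT_pmf hP hQ _, VV_pmf hP hQ _, ⟨?_, ?_⟩,
      fun x y => (Jrho_eq hP hQ hρ1 x y).symm⟩
    · rw [DTQ_eq hc.left]; exact_mod_cast h1
    · rw [DQP_eq hc, h2]
  · intro T V hT hV hRD hD x y
    have hpos : 0 < 1 + ρ := by linarith
    obtain ⟨hc, h1, h2⟩ := minimizer_real hRD hD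
    have h3 := duality_pos hP hQ hT hV hc hpos
    have h4 : ρ * KB T V Q ≤ ρ * R := mul_le_mul_of_nonpos_left h1 hρ.2
    rw [Jrho_eq hP hQ hρ1, h3.2 (le_antisymm (by rw [h2]; linarith) h3.1)]
  · intro T V hT hV hRD hD
    subst hρ1
    rw [show (1 : ℝ) + -1 = 0 by norm_num] at hD
    obtain ⟨hc, h1, h2⟩ := minimizer_real hRD hD
    have h3 := duality_zero hP hQ hT hV hc
    obtain ⟨h4, h5⟩ := h3.2 (le_antisymm (by rw [h2]; linarith) h3.1)
    have h6 : KB T V Q = R := by linarith [h3.1]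
    -- where `T` vanishes, `V` need not be admissible and is replaced by an admissible choice
    have heq : ∀ x y, T y * V y x = Tm1 Q P y * (if T y = 0 then VV Q P 0 y else V y) x := by
      intro x y
      rw [← TT_zero, ← h4 y]
      split_ifs with h <;> simp [h]
    have hadm : AdmissibleAtM1 Q P fun y => if T y = 0 then VV Q P 0 y else V y := by
      intro y x hx
      dsimp only
      split_ifs with h
      · exact VV_zero_admissible hQ hP y x hx
      · by_contra h0
        exact hx ((argmax_iff hQ).2 (h5 y x (mul_ne_zero h h0)))
    refine ⟨fun y => if T y = 0 then VV Q P 0 y else V y, fun y => ?_, hadm, ?_, heq⟩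
    · dsimp only
      split_ifs
      · exact VV_pmf hP hQ 0 y
      · exact hV y
    · rw [← h6, ← TT_zero, DTQ_eq (admissible_absCont hP hQ hadm).left, EReal.coe_eq_coe_iff]
      unfold KB
      refine Finset.sum_congr rfl fun y _ => Finset.sum_congr rfl fun x _ => ?_
      rw [← h4 y]
      dsimp only
      split_ifs with h <;> simp [h]
  · intro V' hV' hA hD
    subst hρ1
    rw [show (1 : ℝ) + -1 = 0 by norm_num]
    refine ⟨hD.ge, ?_⟩
    rw [← TT_zero] at hD ⊢
    have hc := admissible_absCont hP hQ hA
    rw [DTQ_eq hc.left, EReal.coe_eq_coe_iff] at hD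
    rw [DQP_eq hc, EReal.coe_eq_coe_iff]
    have := admissible_tight hP hQ hV' hA
    rw [hD] at this
    linarith
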